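/- For the usual least squares (P = Id), the covariance V = (J'J)⁻¹J'ΩJ(J'J)⁻¹ satisfies V = (J'J)⁻¹W(J'J)⁻¹ where W_{kl} = ∫_{−1/(2δt)}^{1/(2δt)} S(f) conj(F{J}_k(f)) F{J}_l(f) / δt² df, provided Ω_{ij} = R((i−j)δt) and S = F{R} is the DTFT of the (absolutely summable) correlation sequence R(kδt). -/

import Mathlib

open Matrix MeasureTheory ComplexOrder

/-- The complex exponential `e^{-2πix}`. -/
noncomputable def cexp (x : ℝ) : ℂ := Complex.exp (-2 * Real.pi * x * Complex.I)

/-- Extension of an `N × p` matrix to `ℤ × Fin p` by zeros. -/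
def matExt {N p : ℕ} (J : Matrix (Fin N) (Fin p) ℂ) : ℤ → Fin p → ℂ :=
  fun k l => if h : 0 ≤ k ∧ k < N then J ⟨k.toNat, by omega⟩ l else 0

/-- The Discrete Time Fourier Transform of a summable `G : ℤ → ℂ`. -/
noncomputable def dtft (δt : ℝ) (G : ℤ → ℂ) (f : ℝ) : ℂ :=
  (δt : ℂ) * ∑' k : ℤ, G k * cexp (k * f * δt)

/-!
Each DTFT of an absolutely summable sequence can be integrated term by term against an integrable
function over one period. Orthogonality of the exponentials then gives the inversion formula
`∫ F{R}(f) e^{2πinfδt} df = R n`, and expanding both DTFTs in `∫ F{R} conj(F{u}) F{v} / δt²` gives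
`∑ conj(u i) R (i - j) v j`. For `u`, `v` columns of `J` this is an entry of `Jᴴ Ω J`, so in fact
`W = Jᴴ Ω J`.
-/

lemma cexp_add (x y : ℝ) : cexp (x + y) = cexp x * cexp y := by
  unfold cexp
  rw [← Complex.exp_add]
  push_cast
  ring_nf

lemma star_cexp (x : ℝ) : star (cexp x) = cexp (-x) := by
  simp [cexp, ← Complex.exp_conj, Complex.conj_ofNat]

lemma norm_cexp (x : ℝ) : ‖cexp x‖ = 1 := by
  have exponent_eq : -2 * Real.pi * x * Complex.I = (-2 * Real.pi * x : ℝ) * Complex.I := by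
    push_cast
    ring
  rw [cexp, exponent_eq, Complex.norm_exp_ofReal_mul_I]

@[fun_prop]
lemma continuous_cexp : Continuous cexp := by
  unfold cexp
  fun_prop

lemma integral_cexp_int_mul {δt : ℝ} (hδt : δt ≠ 0) (n : ℤ) :
    ∫ f in (-(1 / (2 * δt)))..(1 / (2 * δt)), cexp (n * f * δt) =
      if n = 0 then (δt : ℂ)⁻¹ else 0 := by
  have hδt' : (δt : ℂ) ≠ 0 := by exact_mod_cast hδt
  split_ifs with hn
  · simp only [hn, cexp, Int.cast_zero, zero_mul, Complex.ofReal_zero, mul_zero, Complex.exp_zero,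
      intervalIntegral.integral_const, Complex.real_smul, mul_one]
    push_cast
    field_simp
    norm_num
  · set c : ℂ := -2 * Real.pi * n * δt * Complex.I with hc
    have hc_ne : c ≠ 0 := by simp [hc, hn, hδt]
    have cexp_eq (f : ℝ) : cexp (n * f * δt) = Complex.exp (c * f) := by
      simp only [cexp, hc]
      push_cast
      ring_nf
    have endpoints_eq : Complex.exp (c * (1 / (2 * δt) : ℝ)) =
        Complex.exp (c * (-(1 / (2 * δt)) : ℝ)) := by
      refine Complex.exp_eq_exp_iff_exists_int.mpr ⟨-n, ?_⟩
      push_cast [hc]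
      field_simp
      ring
    simp_rw [cexp_eq]
    rw [integral_exp_mul_complex hc_ne, endpoints_eq, sub_self, zero_div]

lemma summable_norm_mul_cexp {G : ℤ → ℂ} (hG : Summable fun k => ‖G k‖) (δt f : ℝ) :
    Summable fun k : ℤ => ‖G k * cexp (k * f * δt)‖ := by
  simpa only [norm_mul, norm_cexp, mul_one] using hG

lemma continuous_dtft (δt : ℝ) {G : ℤ → ℂ} (hG : Summable fun k => ‖G k‖) :
    Continuous (dtft δt G) := by
  refine continuous_const.mul (continuous_tsum (fun k => by fun_prop) hG fun k f => ?_)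
  rw [norm_mul, norm_cexp, mul_one]

lemma star_dtft (δt : ℝ) (G : ℤ → ℂ) (f : ℝ) :
    star (dtft δt G f) = dtft δt (fun k => star (G (-k))) f := by
  rw [dtft, dtft, star_mul', tsum_star, ← (Equiv.neg ℤ).tsum_eq]
  simp [star_cexp]

lemma integral_mul_dtft {g : ℝ → ℂ} {a b : ℝ} (hg : IntervalIntegrable g volume a b) (δt : ℝ)
    {G : ℤ → ℂ} (hG : Summable fun k => ‖G k‖) :
    ∫ f in a..b, g f * dtft δt G f =
      δt * ∑' k : ℤ, G k * ∫ f in a..b, g f * cexp (k * f * δt) := by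
  have hasSum_terms : HasSum (fun k : ℤ => ∫ f in a..b, G k * (g f * cexp (k * f * δt)))
      (∫ f in a..b, g f * ∑' k : ℤ, G k * cexp (k * f * δt)) := by
    refine intervalIntegral.hasSum_integral_of_dominated_convergence (fun k f => ‖G k‖ * ‖g f‖)
      (fun k => ?_) (fun k => .of_forall fun f _ => ?_)
      (.of_forall fun f _ => hG.mul_right _) ?_ (.of_forall fun f _ => ?_)
    · exact ((intervalIntegrable_iff.mp hg).aestronglyMeasurable.mul
        (Continuous.aestronglyMeasurable (by fun_prop))).const_mul _
    · simp only [norm_mul, norm_cexp, mul_one, le_refl]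
    · simpa only [tsum_mul_right] using hg.norm.const_mul _
    · simpa only [mul_left_comm] using
        (summable_norm_mul_cexp hG δt f).of_norm.hasSum.mul_left (g f)
  simp only [dtft, mul_left_comm _ (δt : ℂ), intervalIntegral.integral_const_mul,
    ← hasSum_terms.tsum_eq]

lemma integral_mul_star_dtft {g : ℝ → ℂ} {a b : ℝ} (hg : IntervalIntegrable g volume a b)
    (δt : ℝ) {G : ℤ → ℂ} (hG : Summable fun k => ‖G k‖) :
    ∫ f in a..b, g f * star (dtft δt G f) =
      δt * ∑' k : ℤ, star (G k) * ∫ f in a..b, g f * cexp (-(k * f * δt)) := by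
  have hG_neg : Summable fun k => ‖star (G (-k))‖ := by
    simpa only [norm_star, Function.comp_def] using hG.comp_injective neg_injective
  simp_rw [star_dtft]
  rw [integral_mul_dtft hg δt hG_neg, ← (Equiv.neg ℤ).tsum_eq]
  simp

lemma integral_dtft_mul_cexp_neg {δt : ℝ} (hδt : δt ≠ 0) {R : ℤ → ℂ}
    (hR : Summable fun k => ‖R k‖) (n : ℤ) :
    ∫ f in (-(1 / (2 * δt)))..(1 / (2 * δt)), dtft δt R f * cexp (-(n * f * δt)) = R n := by
  have cexp_neg_mul_cexp (k : ℤ) (f : ℝ) :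
      cexp (-(n * f * δt)) * cexp (k * f * δt) = cexp ((k - n : ℤ) * f * δt) := by
    rw [← cexp_add]
    push_cast
    ring_nf
  have cexp_integrable : IntervalIntegrable (fun f => cexp (-(n * f * δt))) volume
      (-(1 / (2 * δt))) (1 / (2 * δt)) :=
    Continuous.intervalIntegrable (by fun_prop) _ _
  simp_rw [mul_comm (dtft δt R _)]
  rw [integral_mul_dtft cexp_integrable δt hR]
  simp_rw [cexp_neg_mul_cexp, integral_cexp_int_mul hδt, sub_eq_zero, mul_ite, mul_zero]
  rw [tsum_ite_eq]
  field_simp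

theorem integral_dtft_mul_star_dtft_mul_dtft {δt : ℝ} (hδt : δt ≠ 0) {R u v : ℤ → ℂ}
    (hR : Summable fun k => ‖R k‖) (hu : Summable fun k => ‖u k‖)
    (hv : Summable fun k => ‖v k‖) :
    ∫ f in (-(1 / (2 * δt)))..(1 / (2 * δt)),
        dtft δt R f * star (dtft δt u f) * dtft δt v f / (δt : ℂ) ^ 2 =
      ∑' j, v j * ∑' i, star (u i) * R (i - j) := by
  have hR_cont := continuous_dtft δt hR
  have hu_cont := continuous_dtft δt hu
  have cexp_mul_cexp_neg (i j : ℤ) (f : ℝ) :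
      cexp (j * f * δt) * cexp (-(i * f * δt)) = cexp (-((i - j : ℤ) * f * δt)) := by
    rw [← cexp_add]
    push_cast
    ring_nf
  have integral_u (j : ℤ) : ∫ f in (-(1 / (2 * δt)))..(1 / (2 * δt)),
      dtft δt R f * star (dtft δt u f) * cexp (j * f * δt) =
        δt * ∑' i, star (u i) * R (i - j) := by
    simp_rw [mul_right_comm (dtft δt R _)]
    rw [integral_mul_star_dtft (Continuous.intervalIntegrable (by fun_prop) _ _) δt hu]
    simp_rw [mul_assoc (dtft δt R _), cexp_mul_cexp_neg, integral_dtft_mul_cexp_neg hδt hR]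
  rw [intervalIntegral.integral_div,
    integral_mul_dtft (Continuous.intervalIntegrable (by fun_prop) _ _) δt hv]
  simp_rw [integral_u, mul_left_comm _ (δt : ℂ), tsum_mul_left]
  field_simp

lemma matExt_natCast {N p : ℕ} (J : Matrix (Fin N) (Fin p) ℂ) (i : Fin N) (l : Fin p) :
    matExt J (i : ℤ) l = J i l := by
  simp [matExt]

lemma support_matExt_subset {N p : ℕ} (J : Matrix (Fin N) (Fin p) ℂ) (l : Fin p) :
    (Function.support fun k => matExt J k l) ⊆ Set.range fun i : Fin N => (i : ℤ) := by
  intro k hk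
  have hk_mem : 0 ≤ k ∧ k < N := by
    by_contra hk_notMem
    exact hk (dif_neg hk_notMem)
  exact ⟨⟨k.toNat, by omega⟩, Int.toNat_of_nonneg hk_mem.1⟩

lemma summable_norm_matExt {N p : ℕ} (J : Matrix (Fin N) (Fin p) ℂ) (l : Fin p) :
    Summable fun k => ‖matExt J k l‖ :=
  summable_of_hasFiniteSupport <| (Set.finite_range _).subset fun _ hk =>
    support_matExt_subset J l (norm_ne_zero_iff.mp hk)

lemma tsum_int_eq_sum_fin {E : Type*} [AddCommMonoid E] [TopologicalSpace E] {N : ℕ} {F : ℤ → E}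
    (hF : F.support ⊆ Set.range fun i : Fin N => (i : ℤ)) : ∑' k, F k = ∑ i : Fin N, F i := by
  have natCast_injective : Function.Injective fun i : Fin N => (i : ℤ) :=
    Nat.cast_injective.comp Fin.val_injective
  rw [← natCast_injective.tsum_eq hF, tsum_fintype]

lemma tsum_matExt_mul {N p : ℕ} (J : Matrix (Fin N) (Fin p) ℂ) (l : Fin p) (c : ℤ → ℂ) :
    ∑' k, matExt J k l * c k = ∑ i : Fin N, J i l * c i := by
  rw [tsum_int_eq_sum_fin fun k hk => support_matExt_subset J l (left_ne_zero_of_mul hk)]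
  simp only [matExt_natCast]

lemma tsum_star_matExt_mul {N p : ℕ} (J : Matrix (Fin N) (Fin p) ℂ) (l : Fin p) (c : ℤ → ℂ) :
    ∑' k, star (matExt J k l) * c k = ∑ i : Fin N, star (J i l) * c i := by
  rw [tsum_int_eq_sum_fin fun k hk =>
    support_matExt_subset J l (star_ne_zero.mp (left_ne_zero_of_mul hk))]
  simp only [matExt_natCast]

theorem integral_dtft_matExt_eq_conjTranspose_mul_mul {N p : ℕ} {δt : ℝ} (hδt : δt ≠ 0)
    (J : Matrix (Fin N) (Fin p) ℂ) {R : ℤ → ℂ} (hR : Summable fun k => ‖R k‖) (k l : Fin p) :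
    ∫ f in (-(1 / (2 * δt)))..(1 / (2 * δt)),
        dtft δt R f * star (dtft δt (fun i => matExt J i k) f) *
          dtft δt (fun i => matExt J i l) f / (δt : ℂ) ^ 2 =
      (Jᴴ * Matrix.of (fun i j : Fin N => R (i - j)) * J) k l := by
  rw [integral_dtft_mul_star_dtft_mul_dtft hδt hR (summable_norm_matExt J k)
    (summable_norm_matExt J l), tsum_matExt_mul]
  simp only [tsum_star_matExt_mul, Matrix.mul_apply, conjTranspose_apply, of_apply,
    mul_comm (J _ l)]

/-- For usual least squares (`P = Id`), the covariance
`V = (JᴴJ)⁻¹ Jᴴ Ω J (JᴴJ)⁻¹` equals `(JᴴJ)⁻¹ W (JᴴJ)⁻¹` where `W` is expressed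
in the Fourier domain through the noise PSD `S = F{R}`. -/
theorem stmt_18 {N p : ℕ} (δt : ℝ) (hδt : 0 < δt)
    (J : Matrix (Fin N) (Fin p) ℂ) (hJ : J.rank = p)
    (R : ℤ → ℂ) (hR : Summable fun k : ℤ => ‖R k‖)
    (Om : Matrix (Fin N) (Fin N) ℂ) (hOm : ∀ i j, Om i j = R ((i : ℤ) - (j : ℤ)))
    (S : ℝ → ℂ) (hS : ∀ f, S f = dtft δt R f)
    (W : Matrix (Fin p) (Fin p) ℂ)
    (hW : ∀ k l, W k l = ∫ f in (-(1 / (2 * δt)))..(1 / (2 * δt)),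
        S f * star (dtft δt (fun i => matExt J i k) f) *
          dtft δt (fun i => matExt J i l) f / (δt : ℂ) ^ 2) :
    (Jᴴ * J)⁻¹ * Jᴴ * Om * J * (Jᴴ * J)⁻¹ = (Jᴴ * J)⁻¹ * W * (Jᴴ * J)⁻¹ := by
  have W_eq : W = Jᴴ * Om * J := by
    ext k l
    simp_rw [hW, hS]
    rw [integral_dtft_matExt_eq_conjTranspose_mul_mul hδt.ne' J hR,
      show Om = Matrix.of fun i j : Fin N => R (i - j) from Matrix.ext hOm]
  simp only [W_eq, Matrix.mul_assoc]
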